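/- Let t₁ ∈ R₁ and t₂ ∈ R₂ be reflections of G4 with t₂ ≠ t₁² (i.e., t₁ and t₂ are not inverses of each other). Then the Hurwitz orbit of the pair (t₁, t₂) has exactly four elements; exactly four distinct reflections appear as entries of pairs in this orbit, namely t₁, t₁′ ∈ R₁ and t₂, t₂′ ∈ R₂; and moreover R₁ = {t₁, t₁′, t₂², t₂′²} (so in particular t₁² ≠ t₂′, t₁′² ≠ t₂, and t₁′² ≠ t₂′). -/

import Mathlib

noncomputable section

open Matrix Complex

/-- The `i`-th Hurwitz move on length-`k` tuples of group elements. -/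
def IsHurwitzMove {G : Type*} [Group G] {k : ℕ} (t t' : Fin k → G) : Prop :=
  ∃ i : ℕ, ∃ h : i + 1 < k,
    t' ⟨i, Nat.lt_of_succ_lt h⟩ = t ⟨i + 1, h⟩ ∧
    t' ⟨i + 1, h⟩ = (t ⟨i + 1, h⟩)⁻¹ * t ⟨i, Nat.lt_of_succ_lt h⟩ * t ⟨i + 1, h⟩ ∧
    ∀ j : Fin k, (j : ℕ) ≠ i → (j : ℕ) ≠ i + 1 → t' j = t j

/-- Two tuples lie in the same Hurwitz orbit. -/
def SameHurwitzOrbit {G : Type*} [Group G] {k : ℕ} (t t' : Fin k → G) : Prop :=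
  Relation.EqvGen IsHurwitzMove t t'

/-- A group element `r` appears (as an entry) in the Hurwitz orbit of the tuple `t`. -/
def Appears {G : Type*} [Group G] {k : ℕ} (r : G) (t : Fin k → G) : Prop :=
  ∃ s : Fin k → G, SameHurwitzOrbit t s ∧ ∃ j, s j = r

/-- A tuple has two consecutive equal entries. -/
def HasConsecutiveEqualPair {G : Type*} [Group G] {k : ℕ} (t : Fin k → G) : Prop :=
  ∃ i : ℕ, ∃ h : i + 1 < k, t ⟨i, Nat.lt_of_succ_lt h⟩ = t ⟨i + 1, h⟩

/-- Replace the `p`-th entry of a tuple by two consecutive copies of its square. -/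
def doubleAt {G : Type*} [Group G] {m : ℕ} (t : Fin m → G) (p : Fin m) : Fin (m + 1) → G :=
  fun j =>
    if h1 : (j : ℕ) < (p : ℕ) then t ⟨j, h1.trans p.isLt⟩
    else if h2 : (j : ℕ) ≤ (p : ℕ) + 1 then (t p) ^ 2
    else t ⟨(j : ℕ) - 1, by have := j.isLt; omega⟩

/-- `ω = e^(2πi/3)`. -/
def ω : ℂ := Complex.exp (2 * Real.pi * Complex.I / 3)

def AMat : Matrix (Fin 2) (Fin 2) ℂ := !![1, 0; 0, ω]

def BMat : Matrix (Fin 2) (Fin 2) ℂ :=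
  !![(ω - ω ^ 2) / 3, ω ^ 2; (-2 * ω ^ 2) / 3, (-ω - 2 * ω ^ 2) / 3]

/-- The complex reflection group G₄ as the subgroup of GL(2,ℂ) generated by `AMat`, `BMat`. -/
def G4 : Subgroup (GL (Fin 2) ℂ) :=
  Subgroup.closure {g : GL (Fin 2) ℂ |
    (g : Matrix (Fin 2) (Fin 2) ℂ) = AMat ∨ (g : Matrix (Fin 2) (Fin 2) ℂ) = BMat}

/-- The matrix underlying an element of G₄. -/
def mat (t : G4) : Matrix (Fin 2) (Fin 2) ℂ := ((t : GL (Fin 2) ℂ) : Matrix (Fin 2) (Fin 2) ℂ)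

/-- A reflection in G₄: a non-identity element with eigenvalue 1. -/
def IsReflection (t : G4) : Prop := t ≠ 1 ∧ (mat t - 1).det = 0

/-- The conjugacy class R₁ of reflections of determinant ω. -/
def R1 : Set G4 := {t | IsReflection t ∧ (mat t).det = ω}

/-- The conjugacy class R₂ of reflections of determinant ω². -/
def R2 : Set G4 := {t | IsReflection t ∧ (mat t).det = ω ^ 2}

/-- A Coxeter element of G₄: an element with a primitive 6th root of unity as eigenvalue. -/
def IsCoxeter (c : G4) : Prop :=
  ∃ ζ : ℂ, IsPrimitiveRoot ζ 6 ∧ (mat c - ζ • (1 : Matrix (Fin 2) (Fin 2) ℂ)).det = 0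

/-- The relators of G₅: a³, b³, abab(baba)⁻¹. -/
def g5Rels : Set (FreeGroup (Fin 2)) :=
  {FreeGroup.of 0 ^ 3, FreeGroup.of 1 ^ 3,
    FreeGroup.of 0 * FreeGroup.of 1 * FreeGroup.of 0 * FreeGroup.of 1 *
      (FreeGroup.of 1 * FreeGroup.of 0 * FreeGroup.of 1 * FreeGroup.of 0)⁻¹}

/-- The complex reflection group G₅, by its presentation ⟨a,b | a³ = b³ = 1, abab = baba⟩. -/
abbrev G5 := PresentedGroup g5Rels

def ga : G5 := PresentedGroup.of 0
def gb : G5 := PresentedGroup.of 1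

/-- The conjugacy class of `a` in G₅. -/
def S1 : Set G5 := {t | IsConj ga t}
/-- The conjugacy class of `b` in G₅. -/
def S2 : Set G5 := {t | IsConj gb t}
/-- The conjugacy class of `a²` in G₅. -/
def S3 : Set G5 := {t | IsConj (ga ^ 2) t}
/-- The conjugacy class of `b²` in G₅. -/
def S4 : Set G5 := {t | IsConj (gb ^ 2) t}

/-- A reflection in G₅: a conjugate of a, b, a², or b². -/
def IsReflection5 (t : G5) : Prop := t ∈ S1 ∨ t ∈ S2 ∨ t ∈ S3 ∨ t ∈ S4

/-- A Coxeter element of G₅: an element of order 12. -/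
def IsCoxeter5 (c : G5) : Prop := orderOf c = 12

/-- A 2×2 matrix over the Eisenstein integers. -/
structure E8 where
  (a a' b b' c c' d d' : ℤ)
deriving DecidableEq

namespace E8

def mul (x y : E8) : E8 :=
  ⟨x.a * y.a - x.a' * y.a' + (x.b * y.c - x.b' * y.c'),
   x.a * y.a' + x.a' * y.a - x.a' * y.a' + (x.b * y.c' + x.b' * y.c - x.b' * y.c'),
   x.a * y.b - x.a' * y.b' + (x.b * y.d - x.b' * y.d'),
   x.a * y.b' + x.a' * y.b - x.a' * y.b' + (x.b * y.d' + x.b' * y.d - x.b' * y.d'),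
   x.c * y.a - x.c' * y.a' + (x.d * y.c - x.d' * y.c'),
   x.c * y.a' + x.c' * y.a - x.c' * y.a' + (x.d * y.c' + x.d' * y.c - x.d' * y.c'),
   x.c * y.b - x.c' * y.b' + (x.d * y.d - x.d' * y.d'),
   x.c * y.b' + x.c' * y.b - x.c' * y.b' + (x.d * y.d' + x.d' * y.d - x.d' * y.d')⟩

def one : E8 := ⟨1, 0, 0, 0, 0, 0, 1, 0⟩

/-- Determinant, as an Eisenstein integer. -/
def dt (x : E8) : ℤ × ℤ :=
  (x.a * x.d - x.a' * x.d' - (x.b * x.c - x.b' * x.c'),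
   x.a * x.d' + x.a' * x.d - x.a' * x.d' - (x.b * x.c' + x.b' * x.c - x.b' * x.c'))

def sub1 (x : E8) : E8 := ⟨x.a - 1, x.a', x.b, x.b', x.c, x.c', x.d - 1, x.d'⟩

abbrev isR1 (x : E8) : Prop := x ≠ one ∧ x.sub1.dt = (0, 0) ∧ x.dt = (0, 1)
abbrev isR2 (x : E8) : Prop := x ≠ one ∧ x.sub1.dt = (0, 0) ∧ x.dt = (-1, -1)

def S : List E8 :=
  [⟨1, 0, 0, 0, 0, 0, 1, 0⟩, ⟨0, 1, 1, 0, 0, 0, 1, 0⟩, ⟨1, 0, 0, 0, 0, -1, 0, 1⟩, ⟨-1, -1, 1, 1, 0, 0, 1, 0⟩,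
   ⟨0, 0, 0, 1, 0, -1, 0, 1⟩, ⟨0, 1, 1, 0, 1, 1, 0, 0⟩, ⟨1, 0, 0, 0, 1, 0, -1, -1⟩, ⟨0, -1, -1, 0, 0, -1, 0, 1⟩,
   ⟨0, 0, 0, 1, 1, 1, 0, 0⟩, ⟨1, 1, -1, -1, 1, 0, -1, -1⟩, ⟨-1, -1, 1, 1, -1, 0, 1, 1⟩, ⟨0, 1, 1, 0, 0, 1, 0, -1⟩,
   ⟨1, 1, -1, -1, 1, 1, 0, 0⟩, ⟨0, 0, 0, -1, 1, 0, -1, -1⟩, ⟨0, 0, 0, 1, -1, 0, 1, 1⟩, ⟨-1, 0, 0, 0, 0, 1, 0, -1⟩,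
   ⟨0, -1, -1, 0, 0, 0, -1, 0⟩, ⟨-1, -1, 1, 1, -1, -1, 0, 0⟩, ⟨-1, 0, 0, 0, -1, 0, 1, 1⟩, ⟨0, 0, 0, -1, 0, 1, 0, -1⟩,
   ⟨1, 1, -1, -1, 0, 0, -1, 0⟩, ⟨0, -1, -1, 0, -1, -1, 0, 0⟩, ⟨-1, 0, 0, 0, 0, 0, -1, 0⟩, ⟨0, 0, 0, -1, -1, -1, 0, 0⟩]

theorem S_mul : ∀ x ∈ S, ∀ y ∈ S, mul x y ∈ S := by decide +kernel
theorem S_inv : ∀ x ∈ S, ∃ y ∈ S, mul x y = one := by decide +kernel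

abbrev cc (x y : E8) : E8 := mul (mul (mul y y) x) y

theorem S_R1 : ∀ x ∈ S, isR1 x → mul (mul x x) x = one := by decide +kernel
theorem S_R2 : ∀ x ∈ S, isR2 x → mul (mul x x) x = one := by decide +kernel

theorem S_main : ∀ x ∈ S, isR1 x → ∀ y ∈ S, isR2 y → y ≠ mul x x →
    isR1 (cc x y) ∧ isR2 (cc y (cc x y)) ∧ cc (cc x y) (cc y (cc x y)) = x ∧
    cc (cc y (cc x y)) x = y ∧
    x ≠ y ∧ x ≠ cc x y ∧ x ≠ cc y (cc x y) ∧ y ≠ cc x y ∧ y ≠ cc y (cc x y) ∧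
    cc x y ≠ cc y (cc x y) ∧ isR1 (mul y y) ∧
    isR1 (mul (cc y (cc x y)) (cc y (cc x y))) ∧
    ∀ z ∈ S, isR1 z → z = x ∨ z = cc x y ∨ z = mul y y ∨
      z = mul (cc y (cc x y)) (cc y (cc x y)) := by decide +kernel

end E8

theorem om_re : ω.re = -1 / 2 ∧ ω.im = √3 / 2 := by
  have h : (2 * Real.pi * Complex.I / 3 : ℂ) = ((2 * Real.pi / 3 : ℝ) : ℂ) * Complex.I := by
    push_cast; ring
  have h2 : (2 * Real.pi / 3 : ℝ) = Real.pi - Real.pi / 3 := by ring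
  unfold ω
  rw [h, Complex.exp_ofReal_mul_I_re, Complex.exp_ofReal_mul_I_im, h2, Real.cos_pi_sub,
    Real.sin_pi_sub, Real.cos_pi_div_three, Real.sin_pi_div_three]
  constructor <;> ring

theorem om_sq : ω ^ 2 = -1 - ω := by
  have h3 : √3 * √3 = (3 : ℝ) := Real.mul_self_sqrt (by norm_num)
  apply Complex.ext
  · simp only [sq, Complex.mul_re, om_re.1, om_re.2, Complex.sub_re, Complex.neg_re,
      Complex.one_re]
    linarith
  · simp only [sq, Complex.mul_im, om_re.1, om_re.2, Complex.sub_im, Complex.neg_im,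
      Complex.one_im]
    ring

/-- Embedding of Eisenstein integers. -/
def eis (a b : ℤ) : ℂ := a + b * ω

theorem eis_inj {a b a' b' : ℤ} (h : eis a b = eis a' b') : a = a' ∧ b = b' := by
  have hi := congrArg Complex.im h
  have hr := congrArg Complex.re h
  have h3 : √3 ≠ 0 := by positivity
  simp [eis, om_re.1, om_re.2] at hi hr
  subst hi
  simp at hr
  exact ⟨hr, rfl⟩

def PM : Matrix (Fin 2) (Fin 2) ℂ := !![0, 1 + 2 * ω; ω - 1, 1]
def QM : Matrix (Fin 2) (Fin 2) ℂ := !![-ω / 3, (ω / 3) * (1 + 2 * ω); (-ω / 3) * (1 - ω), 0]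

theorem PQ : PM * QM = 1 := by
  have h := om_sq
  ext i j
  fin_cases i <;> fin_cases j <;> simp [PM, QM, Matrix.mul_apply, Fin.sum_univ_two] <;>
    grind

theorem QP : QM * PM = 1 := _root_.mul_eq_one_comm.mp PQ

def core (x : E8) : Matrix (Fin 2) (Fin 2) ℂ :=
  !![eis x.a x.a', eis x.b x.b'; eis x.c x.c', eis x.d x.d']

def toMat (x : E8) : Matrix (Fin 2) (Fin 2) ℂ := PM * core x * QM

theorem core_mul (x y : E8) : core (x.mul y) = core x * core y := by
  have h := om_sq
  ext i j
  fin_cases i <;> fin_cases j <;>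
    simp [core, eis, E8.mul, Matrix.mul_apply, Fin.sum_univ_two] <;> grind

theorem core_one : core E8.one = 1 := by
  ext i j
  fin_cases i <;> fin_cases j <;> simp [core, eis, E8.one]

theorem core_inj {x y : E8} (h : core x = core y) : x = y := by
  have h00 := eis_inj (congrFun (congrFun h 0) 0)
  have h01 := eis_inj (congrFun (congrFun h 0) 1)
  have h10 := eis_inj (congrFun (congrFun h 1) 0)
  have h11 := eis_inj (congrFun (congrFun h 1) 1)
  cases x; cases y
  simp_all

theorem core_det (x : E8) : (core x).det = eis x.dt.1 x.dt.2 := by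
  have h := om_sq
  simp [core, eis, E8.dt, Matrix.det_fin_two]
  grind

theorem core_sub (x : E8) : core x - 1 = core x.sub1 := by
  ext i j
  fin_cases i <;> fin_cases j <;> simp [core, eis, E8.sub1] <;> ring

theorem toMat_mul (x y : E8) : toMat (x.mul y) = toMat x * toMat y := by
  unfold toMat
  rw [core_mul]
  calc PM * (core x * core y) * QM = PM * core x * 1 * core y * QM := by
        simp only [mul_one, Matrix.mul_assoc]
    _ = _ := by rw [← QP]; simp only [Matrix.mul_assoc]

theorem toMat_one : toMat E8.one = 1 := by
  simp [toMat, core_one, PQ]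

theorem core_eq (x : E8) : core x = QM * toMat x * PM := by
  unfold toMat
  calc core x = 1 * core x * 1 := by simp
    _ = _ := by rw [← QP]; simp only [Matrix.mul_assoc]

theorem toMat_inj {x y : E8} (h : toMat x = toMat y) : x = y :=
  core_inj (by rw [core_eq, core_eq, h])

theorem conj_det (M : Matrix (Fin 2) (Fin 2) ℂ) : (PM * M * QM).det = M.det := by
  have h := congrArg Matrix.det PQ
  rw [Matrix.det_mul, Matrix.det_one] at h
  rw [Matrix.det_mul, Matrix.det_mul, mul_right_comm, h, one_mul]

theorem toMat_det (x : E8) : (toMat x).det = eis x.dt.1 x.dt.2 := by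
  rw [toMat, conj_det, core_det]

theorem toMat_sub_det (x : E8) : (toMat x - 1).det = eis x.sub1.dt.1 x.sub1.dt.2 := by
  have : toMat x - 1 = PM * core x.sub1 * QM := by
    rw [← core_sub, toMat, Matrix.mul_sub, Matrix.sub_mul, mul_one, PQ]
  rw [this, conj_det, core_det]

theorem toMat_A : toMat ⟨0, 1, 1, 0, 0, 0, 1, 0⟩ = AMat := by
  have h := om_sq
  ext i j
  fin_cases i <;> fin_cases j <;>
    simp [toMat, core, PM, QM, AMat, eis, Matrix.mul_apply, Fin.sum_univ_two] <;> grind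

theorem toMat_B : toMat ⟨1, 0, 0, 0, 0, -1, 0, 1⟩ = BMat := by
  have h := om_sq
  ext i j
  fin_cases i <;> fin_cases j <;>
    simp [toMat, core, PM, QM, BMat, eis, Matrix.mul_apply, Fin.sum_univ_two] <;> grind

theorem exists_enc (g : G4) : ∃ x ∈ E8.S, toMat x = mat g := by
  obtain ⟨g, hg⟩ := g
  show ∃ x ∈ E8.S, toMat x = (g : Matrix (Fin 2) (Fin 2) ℂ)
  unfold G4 at hg
  induction hg using Subgroup.closure_induction with
  | mem g h =>
    rcases h with h | h
    · exact ⟨_, by decide +kernel, toMat_A.trans h.symm⟩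
    · exact ⟨_, by decide +kernel, toMat_B.trans h.symm⟩
  | one => exact ⟨E8.one, by decide +kernel, toMat_one⟩
  | mul g h _ _ ihg ihh =>
    obtain ⟨x, hx, ex⟩ := ihg
    obtain ⟨y, hy, ey⟩ := ihh
    exact ⟨x.mul y, E8.S_mul x hx y hy, by rw [toMat_mul, ex, ey]; rfl⟩
  | inv g _ ih =>
    obtain ⟨x, hx, ex⟩ := ih
    obtain ⟨y, hy, ey⟩ := E8.S_inv x hx
    refine ⟨y, hy, ?_⟩
    have h1 : (g : Matrix (Fin 2) (Fin 2) ℂ) * toMat y = 1 := by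
      rw [← ex, ← toMat_mul, ey, toMat_one]
    have h2 : ((g⁻¹ : GL (Fin 2) ℂ) : Matrix (Fin 2) (Fin 2) ℂ) * (g : Matrix (Fin 2) (Fin 2) ℂ)
        = 1 := Units.inv_mul g
    calc toMat y = 1 * toMat y := (one_mul _).symm
      _ = _ := by rw [← h2, mul_assoc, h1, mul_one]

def enc (g : G4) : E8 := (exists_enc g).choose
theorem enc_mem (g : G4) : enc g ∈ E8.S := (exists_enc g).choose_spec.1
theorem enc_mat (g : G4) : toMat (enc g) = mat g := (exists_enc g).choose_spec.2

theorem enc_inj {g h : G4} (e : enc g = enc h) : g = h := by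
  apply Subtype.ext
  apply Units.ext
  show mat g = mat h
  rw [← enc_mat, ← enc_mat, e]

theorem enc_mul (g h : G4) : enc (g * h) = (enc g).mul (enc h) := by
  apply toMat_inj
  rw [toMat_mul, enc_mat, enc_mat, enc_mat]
  rfl

theorem enc_one : enc 1 = E8.one := by
  apply toMat_inj
  rw [toMat_one, enc_mat]
  rfl

theorem enc_ne_one (g : G4) : g ≠ 1 ↔ enc g ≠ E8.one := by
  rw [← enc_one]
  exact not_congr ⟨fun h => by rw [h], enc_inj⟩

theorem eis_iff (p : ℤ × ℤ) (a b : ℤ) : eis p.1 p.2 = eis a b ↔ p = (a, b) :=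
  ⟨fun h => Prod.ext (eis_inj h).1 (eis_inj h).2, fun h => by rw [h]⟩

theorem mem_R1 (g : G4) : g ∈ R1 ↔ (enc g).isR1 := by
  have e0 : (0 : ℂ) = eis 0 0 := by simp [eis]
  have e1 : ω = eis 0 1 := by simp [eis]
  unfold R1 IsReflection E8.isR1
  rw [Set.mem_setOf_eq, enc_ne_one, ← enc_mat, toMat_det, toMat_sub_det, ← eis_iff, ← eis_iff,
    ← e0, ← e1, and_assoc]

theorem mem_R2 (g : G4) : g ∈ R2 ↔ (enc g).isR2 := by
  have e0 : (0 : ℂ) = eis 0 0 := by simp [eis]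
  have e1 : ω ^ 2 = eis (-1) (-1) := by rw [om_sq]; simp [eis]; ring
  unfold R2 IsReflection E8.isR2
  rw [Set.mem_setOf_eq, enc_ne_one, ← enc_mat, toMat_det, toMat_sub_det, ← eis_iff, ← eis_iff,
    ← e0, ← e1, and_assoc]

theorem cube {g : G4} (h : ((enc g).mul (enc g)).mul (enc g) = E8.one) : g * g = g⁻¹ := by
  rw [← enc_mul, ← enc_mul, ← enc_one] at h
  exact eq_inv_of_mul_eq_one_left (enc_inj h)

theorem move_iff {G : Type*} [Group G] (s t : Fin 2 → G) :
    IsHurwitzMove s t ↔ t = ![s 1, (s 1)⁻¹ * s 0 * s 1] := by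
  constructor
  · rintro ⟨i, h, h0, h1, -⟩
    obtain rfl : i = 0 := by omega
    funext j
    fin_cases j
    · exact h0
    · exact h1
  · rintro rfl
    refine ⟨0, by norm_num, rfl, rfl, ?_⟩
    intro j h h'
    have := j.isLt
    omega

theorem orbit_eq {G : Type*} [Group G] {a b c d : G} (hc : b⁻¹ * a * b = c)
    (hd : c⁻¹ * b * c = d) (ha : d⁻¹ * c * d = a) (hb : a⁻¹ * d * a = b) :
    {s : Fin 2 → G | SameHurwitzOrbit ![a, b] s} = {![a, b], ![b, c], ![c, d], ![d, a]} := by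
  have m1 : IsHurwitzMove ![a, b] ![b, c] := (move_iff _ _).2 (by simp [hc])
  have m2 : IsHurwitzMove ![b, c] ![c, d] := (move_iff _ _).2 (by simp [hd])
  have m3 : IsHurwitzMove ![c, d] ![d, a] := (move_iff _ _).2 (by simp [ha])
  have m4 : IsHurwitzMove ![d, a] ![a, b] := (move_iff _ _).2 (by simp [hb])
  have inj : ∀ s s' t : Fin 2 → G, IsHurwitzMove s t → IsHurwitzMove s' t → s = s' := by
    intro s s' t h h'
    rw [move_iff] at h h'
    have e := h.symm.trans h'
    have e0 : s 1 = s' 1 := congrFun e 0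
    have e1 : (s 1)⁻¹ * s 0 * s 1 = (s' 1)⁻¹ * s' 0 * s' 1 := congrFun e 1
    rw [e0] at e1
    have e2 : s 0 = s' 0 := by simpa using e1
    funext j
    fin_cases j
    · exact e2
    · exact e0
  have fn : ∀ s t t' : Fin 2 → G, IsHurwitzMove s t → IsHurwitzMove s t' → t = t' := by
    intro s t t' h h'
    rw [move_iff] at h h'
    rw [h, h']
  apply Set.Subset.antisymm
  · intro s hs
    have key : ∀ u v : Fin 2 → G, Relation.EqvGen IsHurwitzMove u v →
        (u ∈ ({![a, b], ![b, c], ![c, d], ![d, a]} : Set (Fin 2 → G)) ↔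
          v ∈ ({![a, b], ![b, c], ![c, d], ![d, a]} : Set (Fin 2 → G))) := by
      intro u v h
      induction h with
      | rel u v h =>
        constructor
        · rintro (rfl | rfl | rfl | rfl)
          · rw [fn _ _ _ h m1]; simp
          · rw [fn _ _ _ h m2]; simp
          · rw [fn _ _ _ h m3]; simp
          · rw [fn _ _ _ h m4]; simp
        · rintro (rfl | rfl | rfl | rfl)
          · rw [inj _ _ _ h m4]; simp
          · rw [inj _ _ _ h m1]; simp
          · rw [inj _ _ _ h m2]; simp
          · rw [inj _ _ _ h m3]; simp
      | refl => rfl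
      | symm _ _ _ ih => exact ih.symm
      | trans _ _ _ _ _ ih1 ih2 => exact ih1.trans ih2
    exact (key _ _ hs).1 (by simp)
  · have o2 := Relation.EqvGen.rel _ _ m1
    have o3 := o2.trans _ _ _ (Relation.EqvGen.rel _ _ m2)
    have o4 := o3.trans _ _ _ (Relation.EqvGen.rel _ _ m3)
    rintro s (rfl | rfl | rfl | rfl)
    · exact Relation.EqvGen.refl _
    · exact o2
    · exact o3
    · exact o4

theorem ncard_four {α : Type*} {a b c d : α} (h1 : a ≠ b) (h2 : a ≠ c) (h3 : a ≠ d)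
    (h4 : b ≠ c) (h5 : b ≠ d) (h6 : c ≠ d) : ({a, b, c, d} : Set α).ncard = 4 := by
  classical
  have : ({a, b, c, d} : Set α) = (({a, b, c, d} : Finset α) : Set α) := by simp
  rw [this, Set.ncard_coe_finset]
  exact Finset.card_eq_of_equiv_fin (by
    exact Finset.equivFinOfCardEq (by simp [*]))

theorem g4_diff_class_pair_orbit (t₁ t₂ : G4) (h₁ : t₁ ∈ R1) (h₂ : t₂ ∈ R2)
    (hne : t₂ ≠ t₁ ^ 2) :
    {s : Fin 2 → G4 | SameHurwitzOrbit ![t₁, t₂] s}.ncard = 4 ∧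
    ∃ t₁' t₂' : G4, t₁' ∈ R1 ∧ t₂' ∈ R2 ∧
      {r : G4 | Appears r ![t₁, t₂]} = {t₁, t₁', t₂, t₂'} ∧
      ({t₁, t₁', t₂, t₂'} : Set G4).ncard = 4 ∧
      R1 = {t₁, t₁', t₂ ^ 2, t₂' ^ 2} := by
  have hne' : enc t₂ ≠ (enc t₁).mul (enc t₁) := by
    rw [← enc_mul, ← sq]
    exact fun h => hne (enc_inj h)
  have main := E8.S_main _ (enc_mem t₁) ((mem_R1 _).1 h₁) _ (enc_mem t₂) ((mem_R2 _).1 h₂) hne'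
  have k1 := cube (E8.S_R1 _ (enc_mem t₁) ((mem_R1 _).1 h₁))
  have k2 := cube (E8.S_R2 _ (enc_mem t₂) ((mem_R2 _).1 h₂))
  simp only [E8.cc, ← enc_mul] at main
  obtain ⟨c, hc⟩ : ∃ c, c = t₂ * t₂ * t₁ * t₂ := ⟨_, rfl⟩
  rw [← hc] at main
  obtain ⟨d, hd⟩ : ∃ d, d = c * c * t₂ * c := ⟨_, rfl⟩
  rw [← hd] at main
  obtain ⟨rc, rd, ha, hb, n1, n2, n3, n4, n5, n6, q1, q2, all⟩ := main
  have kc := cube (E8.S_R1 _ (enc_mem c) rc)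
  have kd := cube (E8.S_R2 _ (enc_mem d) rd)
  have ha := enc_inj ha
  have hb := enc_inj hb
  have ne : ∀ {g h : G4}, enc g ≠ enc h → g ≠ h := fun h e => h (by rw [e])
  have n1 := ne n1
  have n2 := ne n2
  have n3 := ne n3
  have n4 := ne n4
  have n5 := ne n5
  have n6 := ne n6
  rw [kd] at ha
  rw [k1] at hb
  rw [k2] at hc
  rw [kc] at hd
  have orb := orbit_eq hc.symm hd.symm ha hb
  refine ⟨?_, c, d, (mem_R1 _).2 rc, (mem_R2 _).2 rd, ?_, ncard_four n2 n1 n3 n4.symm n6 n5, ?_⟩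
  · rw [orb]
    have v0 : ∀ {x y x' y' : G4}, x ≠ x' → ![x, y] ≠ ![x', y'] := fun h e => h (congrFun e 0)
    exact ncard_four (v0 n1) (v0 n2) (v0 n3) (v0 n4) (v0 n5) (v0 n6)
  · have orb' : ∀ s : Fin 2 → G4, SameHurwitzOrbit ![t₁, t₂] s ↔
        s ∈ ({![t₁, t₂], ![t₂, c], ![c, d], ![d, t₁]} : Set (Fin 2 → G4)) := by
      intro s; rw [← orb]; rfl
    ext r
    simp only [Set.mem_setOf_eq, Appears, orb']
    constructor
    · rintro ⟨s, rfl | rfl | rfl | rfl, j, rfl⟩ <;> fin_cases j <;> simp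
    · rintro (rfl | rfl | rfl | rfl)
      · exact ⟨![r, t₂], by simp, 0, rfl⟩
      · exact ⟨![r, d], by simp, 0, rfl⟩
      · exact ⟨![r, c], by simp, 0, rfl⟩
      · exact ⟨![r, t₁], by simp, 0, rfl⟩
  · ext z
    simp only [sq]
    constructor
    · intro hz
      rcases all _ (enc_mem z) ((mem_R1 _).1 hz) with h | h | h | h
      · simp [enc_inj h]
      · simp [enc_inj h]
      · simp [enc_inj h]
      · simp [enc_inj h]
    · rintro (rfl | rfl | rfl | rfl)
      · exact h₁
      · exact (mem_R1 _).2 rc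
      · exact (mem_R1 _).2 q1
      · exact (mem_R1 _).2 q2
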